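/- Let f : I ⊆ ℝ → ℝ be a differentiable mapping on the interior I° of I, a, b ∈ I° with a < b, f′ ∈ L₂[a,b], and suppose f′ is bounded on (a,b) with φ ≤ f′(x) ≤ Φ. Then for all x ∈ [a,b] and α ≥ 1, (b−a) (K(x))^{1/2} ( (1/((b−a)Γ²(α))) ‖f′‖₂² − ((f(b)−f(a))/((b−a)Γ(α)))² )^{1/2} ≤ ((K(x))^{1/2}/(2Γ(α))) (b−a)(Φ − φ), where K(x) = (b−x)^{1−α}(b−a)^{2α−2}(1/(2α+1) + 1/(2α−1) − 1/α) + ((b−x)^α/(b−a)²)((b−x)/α − (b−a)/(2α−1)) − ( ((b−x)^{1−α}(b−a)^{α−1})/(α(α+1)) − (b−x)/(α(b−a)) )². -/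

import Mathlib

open MeasureTheory Set intervalIntegral

/-- The Riemann–Liouville fractional integral of order `α` with base point `a`:
`J_a^α f(x) = (1/Γ(α)) ∫_a^x (x−t)^{α−1} f(t) dt` for `α ≠ 0`, and `J_a^0 f = f`. -/
noncomputable def RL (a α : ℝ) (f : ℝ → ℝ) (x : ℝ) : ℝ :=
  if α = 0 then f x
  else (1 / Real.Gamma α) * ∫ t in a..x, (x - t) ^ (α - 1) * f t

/-- The fractional Peano kernel:
`P₂(x,t) = ((t−a)/(b−a))(b−x)^{1−α}Γ(α)` for `t < x`, and
`P₂(x,t) = ((t−b)/(b−a))(b−x)^{1−α}Γ(α)` for `x ≤ t`. -/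
noncomputable def P2 (a b α x t : ℝ) : ℝ :=
  if t < x then ((t - a) / (b - a)) * (b - x) ^ (1 - α) * Real.Gamma α
  else ((t - b) / (b - a)) * (b - x) ^ (1 - α) * Real.Gamma α

/-- The quantity `K(x)` appearing in the main theorem. -/
noncomputable def K (a b α x : ℝ) : ℝ :=
  (b - x) ^ (1 - α) * (b - a) ^ (2 * α - 2) *
      (1 / (2 * α + 1) + 1 / (2 * α - 1) - 1 / α)
    + ((b - x) ^ α / (b - a) ^ 2) * ((b - x) / α - (b - a) / (2 * α - 1))
    - (((b - x) ^ (1 - α) * (b - a) ^ (α - 1)) / (α * (α + 1))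
        - (b - x) / (α * (b - a))) ^ 2

/-!
The factor next to `√K(x)` is `1 / Γ(α)` times the standard deviation of `f'` for the uniform law
on `[a, b]`, because the mean of `f'` there is `(f b - f a) / (b - a)`. By Popoviciu's inequality,
a random variable with values in `[φ, Φ]` has standard deviation at most `(Φ - φ) / 2`.
-/

theorem average_sq_sub_sq_average_le {Ω : Type*} [MeasurableSpace Ω] {μ : Measure Ω}
    [IsFiniteMeasure μ] [NeZero μ] {m M : ℝ} {X : Ω → ℝ} (hX : AEMeasurable X μ)
    (hmem : ∀ᵐ ω ∂μ, X ω ∈ Icc m M) :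
    (⨍ ω, X ω ^ 2 ∂μ) - (⨍ ω, X ω ∂μ) ^ 2 ≤ ((M - m) / 2) ^ 2 := by
  let ν : Measure Ω := (μ univ)⁻¹ • μ
  have hXν : AEMeasurable X ν := hX.smul_measure _
  have hmemν : ∀ᵐ ω ∂ν, X ω ∈ Icc m M := Measure.ae_smul_measure hmem _
  have hL2 : MemLp X 2 ν := memLp_of_bounded hmemν hXν.aestronglyMeasurable 2
  calc (⨍ ω, X ω ^ 2 ∂μ) - (⨍ ω, X ω ∂μ) ^ 2
      = ProbabilityTheory.variance X ν := (ProbabilityTheory.variance_eq_sub hL2).symm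
    _ ≤ ((M - m) / 2) ^ 2 := ProbabilityTheory.variance_le_sq_of_bounded hmemν hXν

theorem aemeasurable_restrict_of_hasDerivAt {𝕜 F : Type*} [NontriviallyNormedField 𝕜]
    [LocallyCompactSpace 𝕜] [MeasurableSpace 𝕜] [OpensMeasurableSpace 𝕜]
    [NormedAddCommGroup F] [NormedSpace 𝕜 F] [CompleteSpace F] [MeasurableSpace F] [BorelSpace F]
    {μ : Measure 𝕜} {s : Set 𝕜} (hs : MeasurableSet s) {f f' : 𝕜 → F}
    (hderiv : ∀ y ∈ s, HasDerivAt f (f' y) y) : AEMeasurable f' (μ.restrict s) :=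
  (aemeasurable_deriv f _).congr <|
    (ae_restrict_mem hs).mono fun y hy => (hderiv y hy).deriv

section MeanSlope

variable {a b φ Φ : ℝ} {f f' : ℝ → ℝ}

theorem average_sq_deriv_sub_sq_slope_le (hab : a < b) (hf : ContinuousOn f (Icc a b))
    (hderiv : ∀ y ∈ Ioo a b, HasDerivAt f (f' y) y)
    (hbound : ∀ y ∈ Ioo a b, φ ≤ f' y ∧ f' y ≤ Φ) :
    (∫ t in a..b, f' t ^ 2) / (b - a) - ((f b - f a) / (b - a)) ^ 2 ≤ ((Φ - φ) / 2) ^ 2 := by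
  let μ : Measure ℝ := volume.restrict (uIoc a b)
  have hμ : μ = volume.restrict (Ioo a b) := by
    rw [restrict_Ioo_eq_restrict_Ioc, ← uIoc_of_le hab.le]
  have hmeas : AEMeasurable f' μ :=
    hμ ▸ aemeasurable_restrict_of_hasDerivAt measurableSet_Ioo hderiv
  have hmem : ∀ᵐ t ∂μ, f' t ∈ Icc φ Φ :=
    hμ ▸ (ae_restrict_mem measurableSet_Ioo).mono hbound
  have : IsFiniteMeasure μ := hμ ▸ inferInstance
  have : NeZero μ := ⟨by simp [hμ, Measure.restrict_eq_zero, hab]⟩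
  have hint : IntervalIntegrable f' volume a b :=
    intervalIntegrable_iff.mpr <|
      (memLp_of_bounded hmem hmeas.aestronglyMeasurable 1).integrable le_rfl
  have hftc : ∫ t in a..b, f' t = f b - f a :=
    integral_eq_sub_of_hasDerivAt_of_le hab.le hf hderiv hint
  rw [← hftc, ← interval_average_eq_div, ← interval_average_eq_div]
  exact average_sq_sub_sq_average_le hmeas hmem

theorem sqrt_scaled_average_sq_deriv_sub_sq_slope_le (hab : a < b)
    (hf : ContinuousOn f (Icc a b)) (hderiv : ∀ y ∈ Ioo a b, HasDerivAt f (f' y) y)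
    (hbound : ∀ y ∈ Ioo a b, φ ≤ f' y ∧ f' y ≤ Φ) {γ : ℝ} (hγ : 0 < γ) :
    √(1 / ((b - a) * γ ^ 2) * (∫ t in a..b, f' t ^ 2) - ((f b - f a) / ((b - a) * γ)) ^ 2) ≤
      (Φ - φ) / (2 * γ) := by
  have hφΦ : φ ≤ Φ :=
    let ⟨y, hy⟩ := nonempty_Ioo.mpr hab
    (hbound y hy).1.trans (hbound y hy).2
  rw [Real.sqrt_le_left (div_nonneg (sub_nonneg.mpr hφΦ) (by positivity))]
  calc 1 / ((b - a) * γ ^ 2) * (∫ t in a..b, f' t ^ 2) - ((f b - f a) / ((b - a) * γ)) ^ 2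
      = ((∫ t in a..b, f' t ^ 2) / (b - a) - ((f b - f a) / (b - a)) ^ 2) / γ ^ 2 := by
        have hL : b - a ≠ 0 := sub_ne_zero.mpr hab.ne'
        field_simp
    _ ≤ ((Φ - φ) / 2) ^ 2 / γ ^ 2 := by
        gcongr
        exact average_sq_deriv_sub_sq_slope_le hab hf hderiv hbound
    _ = ((Φ - φ) / (2 * γ)) ^ 2 := by ring

theorem main_theorem_second_general (hab : a < b) (hf : ContinuousOn f (Icc a b))
    (hderiv : ∀ y ∈ Ioo a b, HasDerivAt f (f' y) y)
    (hbound : ∀ y ∈ Ioo a b, φ ≤ f' y ∧ f' y ≤ Φ) {c γ : ℝ} (hc : 0 ≤ c) (hγ : 0 < γ) :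
    (b - a) * c *
        √(1 / ((b - a) * γ ^ 2) * (∫ t in a..b, f' t ^ 2) - ((f b - f a) / ((b - a) * γ)) ^ 2) ≤
      c / (2 * γ) * (b - a) * (Φ - φ) :=
  calc _ ≤ (b - a) * c * ((Φ - φ) / (2 * γ)) :=
        mul_le_mul_of_nonneg_left
          (sqrt_scaled_average_sq_deriv_sub_sq_slope_le hab hf hderiv hbound hγ)
          (mul_nonneg (sub_nonneg.mpr hab.le) hc)
    _ = c / (2 * γ) * (b - a) * (Φ - φ) := by ring

end MeanSlope

/-- **Main theorem, second inequality.** Under the same hypotheses, the `L₂`-type bound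
is itself bounded by `(K(x)^{1/2}/(2Γ(α))) (b−a)(Φ−φ)`. -/
theorem main_theorem_second (I : Set ℝ) (hIconn : I.OrdConnected)
    (a b φ Φ : ℝ) (ha : a ∈ interior I) (hb : b ∈ interior I) (hab : a < b)
    (f f' : ℝ → ℝ) (hderiv : ∀ y ∈ interior I, HasDerivAt f (f' y) y)
    (hL2 : IntervalIntegrable (fun t => (f' t) ^ 2) volume a b)
    (hbound : ∀ x ∈ Ioo a b, φ ≤ f' x ∧ f' x ≤ Φ) :
    ∀ x ∈ Icc a b, ∀ α : ℝ, 1 ≤ α →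
      (b - a) * Real.sqrt (K a b α x) *
          Real.sqrt ((1 / ((b - a) * Real.Gamma α ^ 2)) * (∫ t in a..b, (f' t) ^ 2) -
            ((f b - f a) / ((b - a) * Real.Gamma α)) ^ 2) ≤
        (Real.sqrt (K a b α x) / (2 * Real.Gamma α)) * (b - a) * (Φ - φ) := by
  intro x _ α hα
  have hderivIcc : ∀ y ∈ Icc a b, HasDerivAt f (f' y) y := fun y hy =>
    hderiv y (hIconn.interior.out ha hb hy)
  exact main_theorem_second_general hab (HasDerivAt.continuousOn hderivIcc)
    (fun y hy => hderivIcc y (Ioo_subset_Icc_self hy)) hbound (Real.sqrt_nonneg _)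
    (Real.Gamma_pos_of_pos (zero_lt_one.trans_le hα))
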